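/- arXiv:1303.5509 — 2 statements merged into one kernel-verified Lean document; each statement's English description precedes it below -/
import Mathlib

section
/- Let q be a prime power, let S_T be a tangent splash of ℓ∞ in PG(2,q³) with centre T, and let m be an order-q-subline of PG(2,q³) containing T and not contained in ℓ∞. Then the number of order-q-subplanes of PG(2,q³) tangent to ℓ∞ that contain m and have tangent splash equal to S_T is q(q²−1). -/
namespace TangentSplashPaper

open Projectivization

/-- The point set of the projective plane `PG(2,K)`. -/
abbrev PGPoint (K : Type*) [Field K] := Projectivization K (Fin 3 → K)

/-- `ℓ` is a line of `PG(2,K)`: the set of points lying in a fixed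
2-dimensional linear subspace. -/
def IsLine {K : Type*} [Field K] (ℓ : Set (PGPoint K)) : Prop :=
  ∃ W : Submodule K (Fin 3 → K), Module.finrank K W = 2 ∧
    ℓ = {P : PGPoint K | P.submodule ≤ W}

/-- The distinguished line `ℓ∞` of `PG(2,K)`: points whose last homogeneous
coordinate vanishes. -/
def linf (K : Type*) [Field K] : Set (PGPoint K) := {P : PGPoint K | P.rep 2 = 0}

/-- The homography of `PG(2,K)` induced by a linear automorphism of `K³`;
as maps of point sets, these are exactly the elements of `PGL(3,K)`. -/
def hmap {K : Type*} [Field K] (f : (Fin 3 → K) ≃ₗ[K] (Fin 3 → K)) :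
    PGPoint K → PGPoint K :=
  Projectivization.map f.toLinearMap f.injective

/-- The base subplane `PG(2,F)`: points admitting homogeneous coordinates in
the subfield `F`. -/
def basePlane (F K : Type*) [Field F] [Field K] [Algebra F K] : Set (PGPoint K) :=
  {P : PGPoint K | ∃ v : Fin 3 → K, ∃ hv : v ≠ 0, P = Projectivization.mk K v hv ∧
    ∀ i, v i ∈ (algebraMap F K).range}

/-- An order-`q`-subplane of `PG(2,K)` (`q = |F|`): an image of `PG(2,F)`
under a homography. -/
def IsSubplane (F : Type*) {K : Type*} [Field F] [Field K] [Algebra F K]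
    (S : Set (PGPoint K)) : Prop :=
  ∃ f : (Fin 3 → K) ≃ₗ[K] (Fin 3 → K), S = hmap f '' basePlane F K

/-- An order-`q`-subline of `PG(2,K)`: the intersection of an order-`q`-subplane
with a line of `PG(2,K)` meeting it in `q+1` points. -/
def IsSubline (F : Type*) {K : Type*} [Field F] [Field K] [Algebra F K] (q : ℕ)
    (b : Set (PGPoint K)) : Prop :=
  ∃ S ℓ : Set (PGPoint K), IsSubplane F S ∧ IsLine ℓ ∧
    (S ∩ ℓ).ncard = q + 1 ∧ b = S ∩ ℓ

/-- The splash of a subplane `π` on `ℓ∞`: all points of `ℓ∞` lying on a line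
of `PG(2,K)` spanned by two points of `π`. -/
def splash {K : Type*} [Field K] (π : Set (PGPoint K)) : Set (PGPoint K) :=
  {X : PGPoint K | X ∈ linf K ∧ ∃ P Q : PGPoint K, P ∈ π ∧ Q ∈ π ∧ P ≠ Q ∧
    ∃ ℓ : Set (PGPoint K), IsLine ℓ ∧ P ∈ ℓ ∧ Q ∈ ℓ ∧ X ∈ ℓ}

/-- `S` is a tangent splash of `ℓ∞` with centre `T`: `S` is the splash of some
order-`q`-subplane meeting `ℓ∞` exactly in the point `T`. -/
def IsTangentSplash (F : Type*) {K : Type*} [Field F] [Field K] [Algebra F K]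
    (S : Set (PGPoint K)) (T : PGPoint K) : Prop :=
  ∃ π : Set (PGPoint K), IsSubplane F π ∧ π ∩ linf K = {T} ∧ S = splash π

/-- The set `t_P`: points of `ℓ∞` lying on the extension of a line of the
subplane `π` through the point `P` (lines of `π` are the lines of `PG(2,K)`
meeting `π` in `q+1` points). -/
def pencilTrace {K : Type*} [Field K] (q : ℕ) (π : Set (PGPoint K))
    (P : PGPoint K) : Set (PGPoint K) :=
  {X : PGPoint K | X ∈ linf K ∧ ∃ ℓ : Set (PGPoint K), IsLine ℓ ∧ P ∈ ℓ ∧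
    (π ∩ ℓ).ncard = q + 1 ∧ X ∈ ℓ}

/-!
Let `F` be the subfield of order `q` of `K` and let `λ` be the last coordinate on `K³`, so that `ℓ∞`
is `λ = 0`. A subplane is the point set of an `F`-form `U` of `K³`, and for `p, r ∈ U` the line `pr`
meets `ℓ∞` in `λ(r) p - λ(p) r`. If the subplane is tangent to `ℓ∞` at `⟨t⟩` with `t ∈ U`, these
vectors form the `F`-space `λ(U) t + F s` for some `s`, whose points are the splash.

Fix `t` and `v` with `λ(v) = 1` such that `m` is the point set of `F t + F v`, and write the given
splash as the point set of `B t + F s` with `B` of dimension 2 over `F`. The subplanes through `m`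
come from the forms spanned by `t`, `v` and a vector `w = y⁻¹ (β t + s + z v)`, and such a plane is
tangent with the given splash exactly if `F y + F z = B` and `β ∈ B`. This leaves
`q² (q² - 1) (q² - q)` vectors `w`, and each plane arises from `q³ - q²` of them.
-/

section

open Module Submodule
open scoped LinearAlgebra.Projectivization Pointwise

section Forms

variable {F K V : Type*} [Field F] [Field K] [AddCommGroup V] [Module K V] [Module F V]

/-- The set of points of `ℙ K V` carried by an `F`-subspace `U` of `V`. -/
def points (K : Type*) {F V : Type*} [Field F] [Field K] [AddCommGroup V] [Module K V]
    [Module F V] (U : Submodule F V) : Set (ℙ K V) :=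
  {P | ∃ u ∈ U, ∃ hu : u ≠ 0, P = mk K u hu}

lemma mk_mem_points_iff {U : Submodule F V} {z : V} (hz : z ≠ 0) :
    mk K z hz ∈ points K U ↔ ∃ a : K, a ≠ 0 ∧ a • z ∈ U := by
  constructor
  · rintro ⟨u, hu, hu0, h⟩
    obtain ⟨a, ha⟩ := (mk_eq_mk_iff K u z hu0 hz).1 h.symm
    exact ⟨a, a.ne_zero, ha ▸ hu⟩
  · rintro ⟨a, ha, haU⟩
    exact ⟨a • z, haU, smul_ne_zero ha hz,
      ((mk_eq_mk_iff K _ z _ hz).2 ⟨Units.mk0 a ha, rfl⟩).symm⟩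

lemma mk_mem_points {U : Submodule F V} {u : V} (hu : u ∈ U) (hu0 : u ≠ 0) :
    mk K u hu0 ∈ points K U :=
  ⟨u, hu, hu0, rfl⟩

lemma points_mono {U U' : Submodule F V} (h : U ≤ U') : points K U ⊆ points K U' :=
  fun _ ⟨u, hu, hu0, hP⟩ => ⟨u, h hu, hu0, hP⟩

lemma points_smul [SMulCommClass K F V] {a : K} (ha : a ≠ 0) (U : Submodule F V) :
    points K (a • U) = points K U := by
  ext P
  induction P with | h z hz =>
  simp only [mk_mem_points_iff]
  constructor
  · rintro ⟨b, hb, h⟩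
    refine ⟨a⁻¹ * b, mul_ne_zero (inv_ne_zero ha) hb, ?_⟩
    obtain ⟨u, hu, hub⟩ := (mem_smul_pointwise_iff_exists _ _ _).1 h
    rwa [mul_smul, ← hub, inv_smul_smul₀ ha]
  · rintro ⟨b, hb, h⟩
    exact ⟨a * b, mul_ne_zero ha hb, mul_smul a b z ▸ smul_mem_pointwise_smul _ a U h⟩

/-- An `F`-form: an `F`-subspace of the `K`-space `V` spanned by `K`-linearly independent vectors,
such as `Fⁿ` in `Kⁿ`. Its points then form a subgeometry of `ℙ K V` defined over `F`. -/
def IsForm (K : Type*) {F V : Type*} [Field F] [Field K] [AddCommGroup V] [Module K V]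
    [Module F V] (U : Submodule F V) : Prop :=
  ∃ s : Set V, LinearIndepOn K id s ∧ span F s = U

variable [Algebra F K] [IsScalarTower F K V]

-- Applying `ρ` to the coordinates descends `K`-linear relations in `U` to `F`-linear ones.
lemma IsForm.exists_retraction {U : Submodule F V} (hU : IsForm K U) :
    ∃ (ρ : K →ₗ[F] F) (R : V →ₗ[F] V), ρ 1 = 1 ∧ ∀ (a : K), ∀ u ∈ U, R (a • u) = ρ a • u := by
  obtain ⟨s, hs, rfl⟩ := hU
  obtain ⟨ρ, hρ⟩ := Module.Projective.exists_dual_eq_one F (one_ne_zero : (1 : K) ≠ 0)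
  obtain ⟨L, hL⟩ := LinearMap.exists_leftInverse_of_injective
    (Finsupp.linearCombination K (Subtype.val : s → V)) (LinearMap.ker_eq_bot.2 hs)
  refine ⟨ρ, Finsupp.linearCombination F (Subtype.val : s → V) ∘ₗ
    Finsupp.mapRange.linearMap ρ ∘ₗ L.restrictScalars F, hρ, fun a u hu => ?_⟩
  induction hu using span_induction with
  | mem x hx =>
    have hLx : L (a • x) = Finsupp.single ⟨x, hx⟩ a := by
      simpa using LinearMap.congr_fun hL (Finsupp.single ⟨x, hx⟩ a)
    simp [hLx]
  | zero => simp
  | add x y _ _ hx hy => rw [smul_add, map_add, hx, hy, smul_add]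
  | smul c x _ hx => rw [smul_comm a c x, map_smul, hx, smul_comm]

lemma IsForm.mem_span_iff {U : Submodule F V} (hU : IsForm K U) {s : Set V} (hs : s ⊆ U) {u : V}
    (hu : u ∈ U) : u ∈ span K s ↔ u ∈ span F s := by
  refine ⟨fun h => ?_, fun h => span_le_restrictScalars F K s h⟩
  obtain ⟨ρ, R, hρ, hR⟩ := hU.exists_retraction
  have key : ∀ y ∈ span K s, ∀ a : K, R (a • y) ∈ span F s := by
    intro y hy
    induction hy using span_induction with
    | mem x hx => exact fun a => hR a x (hs hx) ▸ smul_mem _ _ (subset_span hx)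
    | zero => simp
    | add x y _ _ hx hy => exact fun a => by rw [smul_add, map_add]; exact add_mem (hx a) (hy a)
    | smul c x _ hx => exact fun a => by rw [← mul_smul]; exact hx _
  have hu1 := key u h 1
  rwa [hR 1 u hu, hρ, one_smul] at hu1

lemma IsForm.exists_mem_notMem_span {U : Submodule F V} (hU : IsForm K U) {s : Finset V}
    (hs : ↑s ⊆ (U : Set V)) (hcard : s.card < finrank F U) : ∃ u ∈ U, u ∉ span K (s : Set V) := by
  by_contra! h
  have hle : U ≤ span F (s : Set V) := fun u hu => (hU.mem_span_iff hs hu).1 (h u hu)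
  exact hcard.not_ge ((finrank_mono hle).trans (finrank_span_finset_le_card s))

-- Comparing the points `⟨v⟩` and `⟨t + v⟩` removes the scalar ambiguity of `v`.
lemma IsForm.mem_of_points_subset {U U' : Submodule F V} (hU : IsForm K U)
    (h : points K U' ⊆ points K U) {t v : V} (hli : LinearIndependent K ![t, v]) (ht : t ∈ U)
    (ht' : t ∈ U') (hv' : v ∈ U') : v ∈ U := by
  rw [LinearIndependent.pair_iff] at hli
  have hv0 : v ≠ 0 := fun h0 => by simpa [h0] using hli 0 1
  have htv0 : t + v ≠ 0 := fun h0 => by simpa [h0] using hli 1 1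
  obtain ⟨a, ha, hav⟩ := (mk_mem_points_iff hv0).1 (h (mk_mem_points hv' hv0))
  obtain ⟨b, hb, hbtv⟩ := (mk_mem_points_iff htv0).1 (h (mk_mem_points (add_mem ht' hv') htv0))
  have hspan : b • (t + v) ∈ span K {t, a • v} :=
    mem_span_pair.2 ⟨b, b / a, by rw [← mul_smul, div_mul_cancel₀ b ha, smul_add]⟩
  rw [hU.mem_span_iff (Set.pair_subset ht hav) hbtv] at hspan
  obtain ⟨c, d, hcd⟩ := mem_span_pair.1 hspan
  obtain ⟨hc, hd⟩ := hli (algebraMap F K c - b) (algebraMap F K d * a - b) (by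
    rw [sub_smul, sub_smul, mul_smul, algebraMap_smul, algebraMap_smul, sub_add_sub_comm, hcd,
      smul_add, sub_self])
  have hc0 : c ≠ 0 := by
    rintro rfl
    exact hb (by simpa using hc)
  have hcda : algebraMap F K d * a = algebraMap F K c := (sub_eq_zero.1 hd).trans
    (sub_eq_zero.1 hc).symm
  have hv : v = (c⁻¹ * d) • a • v := by
    rw [mul_smul, ← algebraMap_smul K d, ← mul_smul, hcda, algebraMap_smul, inv_smul_smul₀ hc0]
  exact hv ▸ U.smul_mem _ hav

end Forms

section Subplanes

variable {F K : Type*} [Field F] [Field K]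

lemma range_triple {α : Type*} (w t v : α) : Set.range ![w, t, v] = {w, t, v} := by
  rw [Matrix.range_cons, Matrix.range_cons_cons_empty, Set.singleton_union]

lemma linearIndependent_triple_iff {V : Type*} [AddCommGroup V] [Module K V] {w t v : V} :
    LinearIndependent K ![w, t, v] ↔ LinearIndependent K ![t, v] ∧ w ∉ span K {t, v} := by
  rw [← Matrix.range_cons_cons_empty t v ![]]
  exact linearIndependent_finCons

lemma finrank_span_pair {V : Type*} [AddCommGroup V] [Module K V] {p r : V}
    (h : LinearIndependent K ![p, r]) : finrank K (span K {p, r}) = 2 := by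
  rw [← Matrix.range_cons_cons_empty p r ![], finrank_span_eq_card h, Fintype.card_fin]

lemma isForm_span_range {ι V : Type*} [AddCommGroup V] [Module K V] [Module F V] {b : ι → V}
    (hb : LinearIndependent K b) : IsForm K (span F (Set.range b)) :=
  ⟨Set.range b, hb.linearIndepOn_id, rfl⟩

lemma isForm_span_triple {V : Type*} [AddCommGroup V] [Module K V] [Module F V] {w t v : V}
    (h : LinearIndependent K ![w, t, v]) : IsForm K (span F {w, t, v}) :=
  range_triple w t v ▸ isForm_span_range h

variable [Algebra F K]

lemma finrank_span_range {ι V : Type*} [Fintype ι] [AddCommGroup V] [Module K V] [Module F V]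
    [IsScalarTower F K V] {b : ι → V} (hb : LinearIndependent K b) :
    finrank F (span F (Set.range b)) = Fintype.card ι :=
  finrank_span_eq_card (hb.restrict_scalars (by
    simpa only [Algebra.smul_def, mul_one] using (algebraMap F K).injective))

lemma hmap_image_basePlane (b : Basis (Fin 3) K (Fin 3 → K)) :
    hmap b.equivFun.symm '' basePlane F K = points K (span F (Set.range b)) := by
  ext P
  constructor
  · rintro ⟨-, ⟨v, hv, rfl, hvF⟩, rfl⟩
    refine ⟨b.equivFun.symm v, (b.mem_span_iff_repr_mem F _).2 fun i => ?_,
      b.equivFun.symm.map_ne_zero_iff.2 hv, rfl⟩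
    rw [b.equivFun_symm_apply, b.repr_sum_self]
    exact hvF i
  · rintro ⟨u, hu, hu0, rfl⟩
    refine ⟨mk K (b.equivFun u) (b.equivFun.map_ne_zero_iff.2 hu0),
      ⟨_, _, rfl, (b.mem_span_iff_repr_mem F u).1 hu⟩, ?_⟩
    simp only [hmap, map_mk, LinearEquiv.coe_coe, LinearEquiv.symm_apply_apply]

lemma isSubplane_iff_exists_basis {π : Set (PGPoint K)} :
    IsSubplane F π ↔
      ∃ b : Basis (Fin 3) K (Fin 3 → K), points K (span F (Set.range b)) = π := by
  constructor
  · rintro ⟨f, rfl⟩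
    exact ⟨Basis.ofEquivFun f.symm, by rw [← hmap_image_basePlane, Basis.equivFun_ofEquivFun]; rfl⟩
  · rintro ⟨b, rfl⟩
    exact ⟨b.equivFun.symm, (hmap_image_basePlane b).symm⟩

lemma isSubplane_points_span_triple {w t v : Fin 3 → K} (h : LinearIndependent K ![w, t, v]) :
    IsSubplane F (points K (span F {w, t, v})) := by
  refine isSubplane_iff_exists_basis.2 ⟨basisOfLinearIndependentOfCardEqFinrank h (by simp), ?_⟩
  rw [coe_basisOfLinearIndependentOfCardEqFinrank, range_triple]

lemma IsSubplane.exists_form {π : Set (PGPoint K)} (hπ : IsSubplane F π) {t : Fin 3 → K}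
    {ht0 : t ≠ 0} (ht : mk K t ht0 ∈ π) :
    ∃ U : Submodule F (Fin 3 → K), IsForm K U ∧ finrank F U = 3 ∧ t ∈ U ∧ points K U = π := by
  obtain ⟨b, rfl⟩ := isSubplane_iff_exists_basis.1 hπ
  obtain ⟨a, ha, hat⟩ := (mk_mem_points_iff ht0).1 ht
  have hspan : a⁻¹ • span F (Set.range b) =
      span F (Set.range (b.unitsSMul fun _ => Units.mk0 a⁻¹ (inv_ne_zero ha))) := by
    rw [Submodule.smul_span, Set.smul_set_range]
    congr! 3 with i
    exact (b.unitsSMul_apply (w := fun _ => Units.mk0 a⁻¹ (inv_ne_zero ha)) i).symm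
  refine ⟨a⁻¹ • span F (Set.range b), ?_, ?_, ?_, points_smul (inv_ne_zero ha) _⟩
  · exact hspan ▸ isForm_span_range (Basis.linearIndependent _)
  · rw [hspan, finrank_span_range (Basis.linearIndependent _), Fintype.card_fin]
  · simpa only [inv_smul_smul₀ ha] using smul_mem_pointwise_smul _ a⁻¹ _ hat

lemma mk_mem_linf {z : Fin 3 → K} (hz : z ≠ 0) : mk K z hz ∈ linf K ↔ z 2 = 0 := by
  obtain ⟨a, ha⟩ := exists_smul_eq_mk_rep K z hz
  change (mk K z hz).rep 2 = 0 ↔ _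
  rw [← ha, Pi.smul_apply, smul_eq_zero_iff_eq]

lemma isLine_span {p r : Fin 3 → K} (h : LinearIndependent K ![p, r]) :
    IsLine {P : PGPoint K | P.submodule ≤ span K {p, r}} :=
  ⟨_, finrank_span_pair h, rfl⟩

lemma IsLine.mem_iff_of_mem {ℓ : Set (PGPoint K)} (hℓ : IsLine ℓ) {p r : Fin 3 → K} {hp0 : p ≠ 0}
    {hr0 : r ≠ 0} (h : LinearIndependent K ![p, r]) (hp : mk K p hp0 ∈ ℓ) (hr : mk K r hr0 ∈ ℓ)
    {z : Fin 3 → K} (hz0 : z ≠ 0) : mk K z hz0 ∈ ℓ ↔ z ∈ span K {p, r} := by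
  obtain ⟨W, hW, rfl⟩ := hℓ
  simp only [Set.mem_ofPred_eq, submodule_mk, span_singleton_le_iff_mem] at hp hr ⊢
  have hspan : span K {p, r} = W := eq_of_le_of_finrank_le
    (span_le.2 (Set.pair_subset hp hr)) (by rw [hW, finrank_span_pair h])
  rw [hspan]

end Subplanes

section Splashes

variable {F K : Type*} [Field F] [Field K]

lemma linearIndependent_pair_iff_mk_ne {V : Type*} [AddCommGroup V] [Module K V] {p r : V}
    (hp : p ≠ 0) (hr : r ≠ 0) : LinearIndependent K ![p, r] ↔ mk K p hp ≠ mk K r hr := by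
  rw [LinearIndependent.pair_iff' hp, ne_comm, Ne, mk_eq_mk_iff', not_exists]

/-- Homogeneous coordinates of the point where the line `pr` meets `ℓ∞`. This vector vanishes when
`p` and `r` span no line, or span `ℓ∞` itself. -/
def meetInf (p r : Fin 3 → K) : Fin 3 → K := r 2 • p - p 2 • r

lemma meetInf_apply_two (p r : Fin 3 → K) : meetInf p r 2 = 0 := by
  simp only [meetInf, Pi.sub_apply, Pi.smul_apply, smul_eq_mul, mul_comm, sub_self]

lemma meetInf_mem_span (p r : Fin 3 → K) : meetInf p r ∈ span K {p, r} :=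
  mem_span_pair.2 ⟨r 2, -p 2, by rw [meetInf, neg_smul, sub_eq_add_neg]⟩

lemma linearIndependent_of_meetInf_ne_zero {p r : Fin 3 → K} (h : meetInf p r ≠ 0) :
    LinearIndependent K ![p, r] := by
  have hp : p ≠ 0 := by
    rintro rfl
    exact h (by simp [meetInf])
  refine (LinearIndependent.pair_iff' hp).2 fun a ha => h ?_
  rw [meetInf, ← ha, smul_smul, Pi.smul_apply, smul_eq_mul, mul_comm, sub_self]

lemma exists_smul_eq_meetInf {p r z : Fin 3 → K} (h : p 2 ≠ 0 ∨ r 2 ≠ 0) (hz0 : z ≠ 0)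
    (hz : z ∈ span K {p, r}) (hz2 : z 2 = 0) : ∃ a : K, a ≠ 0 ∧ a • z = meetInf p r := by
  obtain ⟨x, y, rfl⟩ := mem_span_pair.1 hz
  replace hz2 : x * p 2 + y * r 2 = 0 := hz2
  have of_smul_eq : ∀ c d : K, c ≠ 0 → c • (x • p + y • r) = d • meetInf p r →
      ∃ a : K, a ≠ 0 ∧ a • (x • p + y • r) = meetInf p r := by
    intro c d hc hcd
    have hd : d ≠ 0 := by
      rintro rfl
      exact smul_ne_zero hc hz0 (by rw [hcd, zero_smul])
    exact ⟨d⁻¹ * c, mul_ne_zero (inv_ne_zero hd) hc, by rw [mul_smul, hcd, inv_smul_smul₀ hd]⟩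
  rcases h with hp | hr
  · refine of_smul_eq (p 2) (-y) hp ?_
    rw [meetInf]
    linear_combination (norm := module) hz2 • p
  · refine of_smul_eq (r 2) x hr ?_
    rw [meetInf]
    linear_combination (norm := module) hz2 • r

lemma mk_mem_splash_points_iff [Module F (Fin 3 → K)] {U : Submodule F (Fin 3 → K)}
    (hU : (points K U ∩ linf K).Subsingleton) {z : Fin 3 → K} (hz0 : z ≠ 0) :
    mk K z hz0 ∈ splash (points K U) ↔
      ∃ a : K, a ≠ 0 ∧ ∃ p ∈ U, ∃ r ∈ U, meetInf p r = a • z := by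
  constructor
  · rintro ⟨hz, -, -, ⟨p, hp, hp0, rfl⟩, ⟨r, hr, hr0, rfl⟩, hne, ℓ, hℓ, hpℓ, hrℓ, hzℓ⟩
    have hpr : p 2 ≠ 0 ∨ r 2 ≠ 0 := by
      by_contra! h2
      exact hne (hU ⟨mk_mem_points hp hp0, (mk_mem_linf hp0).2 h2.1⟩
        ⟨mk_mem_points hr hr0, (mk_mem_linf hr0).2 h2.2⟩)
    have hli := (linearIndependent_pair_iff_mk_ne hp0 hr0).2 hne
    obtain ⟨a, ha, haz⟩ := exists_smul_eq_meetInf hpr hz0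
      ((hℓ.mem_iff_of_mem hli hpℓ hrℓ hz0).1 hzℓ) ((mk_mem_linf hz0).1 hz)
    exact ⟨a, ha, p, hp, r, hr, haz.symm⟩
  · rintro ⟨a, ha, p, hp, r, hr, haz⟩
    have hli : LinearIndependent K ![p, r] :=
      linearIndependent_of_meetInf_ne_zero (haz ▸ smul_ne_zero ha hz0)
    have hp0 : p ≠ 0 := hli.ne_zero 0
    have hr0 : r ≠ 0 := hli.ne_zero 1
    have hz2 : z 2 = 0 := (smul_eq_zero_iff_right ha).1 (haz ▸ meetInf_apply_two p r :)
    have hz : z ∈ span K {p, r} := (smul_mem_iff _ ha).1 (haz ▸ meetInf_mem_span p r)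
    refine ⟨(mk_mem_linf hz0).2 hz2, mk K p hp0, mk K r hr0, mk_mem_points hp hp0,
      mk_mem_points hr hr0, (linearIndependent_pair_iff_mk_ne hp0 hr0).1 hli, _,
      isLine_span hli, ?_⟩
    simp only [Set.mem_ofPred_eq, submodule_mk, span_singleton_le_iff_mem]
    exact ⟨subset_span (Set.mem_insert _ _), subset_span (Set.mem_insert_of_mem _ rfl), hz⟩

variable [Algebra F K]

/-- The `F`-space `B t + F s`, whose points are `⟨t⟩` and the points `⟨β t + s⟩` with `β ∈ B`.
Tangent splashes with centre `⟨t⟩` are the point sets of such spaces. -/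
def clubSpace {V : Type*} [AddCommGroup V] [Module K V] [Module F V] [IsScalarTower F K V]
    (t s : V) (B : Submodule F K) : Submodule F V :=
  B.map ((LinearMap.toSpanSingleton K V t).restrictScalars F) ⊔ span F {s}

lemma mem_clubSpace_iff {V : Type*} [AddCommGroup V] [Module K V] [Module F V]
    [IsScalarTower F K V] {t s z : V} {B : Submodule F K} :
    z ∈ clubSpace t s B ↔ ∃ β ∈ B, ∃ x : F, β • t + x • s = z := by
  simp [clubSpace, mem_sup, mem_span_singleton]

lemma exists_meetInf_eq_iff {b t c : Fin 3 → K} (ht : t 2 = 0) {z : Fin 3 → K} :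
    (∃ p ∈ span F {b, t, c}, ∃ r ∈ span F {b, t, c}, meetInf p r = z) ↔
      z ∈ clubSpace t (meetInf b c) (span F {b 2, c 2}) := by
  simp only [mem_clubSpace_iff, mem_span_triple, mem_span_pair]
  constructor
  · rintro ⟨-, ⟨i, j, k, rfl⟩, -, ⟨i', j', k', rfl⟩, rfl⟩
    refine ⟨_, ⟨j * i' - j' * i, j * k' - j' * k, rfl⟩, i * k' - k * i', ?_⟩
    ext n
    simp only [meetInf, Pi.sub_apply, Pi.add_apply, Pi.smul_apply, smul_eq_mul,
      Algebra.smul_def (R := F) (A := K), map_sub, map_mul, ht]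
    ring
  · rintro ⟨-, ⟨i, k, rfl⟩, x, rfl⟩
    obtain rfl | hx := eq_or_ne x 0
    · refine ⟨t, ⟨0, 1, 0, by simp⟩, _, ⟨i, 0, k, rfl⟩, ?_⟩
      simp [meetInf, ht]
    -- A line of the subplane not through `⟨t⟩` meets the lines `bt` and `tc` in distinct points.
    · refine ⟨_, ⟨x, k, 0, rfl⟩, _, ⟨0, -(i / x), 1, rfl⟩, ?_⟩
      have hx' : algebraMap F K x ≠ 0 := by simpa using hx
      ext n
      simp only [meetInf, Pi.sub_apply, Pi.add_apply, Pi.smul_apply, smul_eq_mul,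
        Algebra.smul_def (R := F) (A := K), map_neg, map_zero, map_one, map_div₀, ht]
      field_simp
      ring

lemma splash_points_span_triple {b t c : Fin 3 → K} (ht : t 2 = 0)
    (h : (points K (span F {b, t, c}) ∩ linf K).Subsingleton) :
    splash (points K (span F {b, t, c})) =
      points K (clubSpace t (meetInf b c) (span F {b 2, c 2})) := by
  ext P
  induction P using Projectivization.ind with | h z hz =>
  rw [mk_mem_splash_points_iff h hz, mk_mem_points_iff]
  simp only [exists_meetInf_eq_iff ht]

end Splashes

section TangentSplashes

variable {F K V : Type*} [Field F] [Field K] [Algebra F K] [AddCommGroup V] [Module K V]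
  [Module F V] [IsScalarTower F K V]

lemma points_span_triple_inter_linf_eq_iff {b t c : Fin 3 → K} (h : LinearIndependent K ![b, t, c])
    (ht : t 2 = 0) (ht0 : t ≠ 0) :
    points K (span F {b, t, c}) ∩ linf K = {mk K t ht0} ↔ LinearIndependent F ![b 2, c 2] := by
  have htU : t ∈ span F {b, t, c} := subset_span (by simp)
  rw [LinearIndependent.pair_iff]
  constructor
  · intro hT i k hik
    have hu2 : (i • b + k • c) 2 = 0 := hik
    obtain ⟨a, ha⟩ : ∃ a : K, a • t = i • b + k • c := by
      obtain hu0 | hu0 := eq_or_ne (i • b + k • c) 0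
      · exact ⟨0, by rw [hu0, zero_smul]⟩
      · refine (mk_eq_mk_iff' K _ t hu0 ht0).1 (hT.subset ⟨mk_mem_points ?_ hu0, ?_⟩)
        · exact mem_span_triple.2 ⟨i, 0, k, by rw [zero_smul, add_zero]⟩
        · exact (mk_mem_linf hu0).2 hu2
    have hcoef := Fintype.linearIndependent_iff.1 h ![algebraMap F K i, -a, algebraMap F K k] (by
      simp only [Fin.sum_univ_three, Matrix.cons_val, algebraMap_smul, neg_smul, ha]
      abel)
    exact ⟨by simpa using hcoef 0, by simpa using hcoef 2⟩
  · intro hli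
    refine subset_antisymm ?_ (Set.singleton_subset_iff.2
      ⟨mk_mem_points htU ht0, (mk_mem_linf ht0).2 ht⟩)
    rintro - ⟨⟨u, hu, hu0, rfl⟩, hu2⟩
    rw [mk_mem_linf] at hu2
    obtain ⟨i, j, k, rfl⟩ := mem_span_triple.1 hu
    obtain ⟨rfl, rfl⟩ := hli i k (by simpa [ht] using hu2)
    refine (mk_eq_mk_iff' _ _ _ _ _).2 ⟨algebraMap F K j, ?_⟩
    simp

lemma IsForm.exists_linearIndependent_pair {U : Submodule F V} (hU : IsForm K U)
    (hrank : 1 < finrank F U) {t : V} (ht : t ∈ U) (ht0 : t ≠ 0) :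
    ∃ c ∈ U, LinearIndependent K ![t, c] := by
  obtain ⟨c, hc, hct⟩ := hU.exists_mem_notMem_span (s := {t}) (by simpa using ht) (by simpa)
  refine ⟨c, hc, (LinearIndependent.pair_iff' ht0).2 fun a ha => hct ?_⟩
  rw [Finset.coe_singleton]
  exact mem_span_singleton.2 ⟨a, ha⟩

lemma finrank_span_triple {w t v : V} (h : LinearIndependent K ![w, t, v]) :
    finrank F (span F {w, t, v}) = 3 := by
  rw [← range_triple, finrank_span_range h, Fintype.card_fin]

lemma IsForm.exists_eq_span_triple {U : Submodule F V} (hU : IsForm K U) (hrank : finrank F U = 3)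
    {t c : V} (h : LinearIndependent K ![t, c]) (ht : t ∈ U) (hc : c ∈ U) :
    ∃ b, LinearIndependent K ![b, t, c] ∧ U = span F {b, t, c} := by
  classical
  obtain ⟨b, hb, hbtc⟩ := hU.exists_mem_notMem_span (s := {t, c})
    (by simpa using Set.pair_subset ht hc) (hrank ▸ Nat.lt_succ_of_le Finset.card_le_two)
  rw [Finset.coe_pair] at hbtc
  have hli := linearIndependent_triple_iff.2 ⟨h, hbtc⟩
  have : FiniteDimensional F U := FiniteDimensional.of_finrank_pos (hrank ▸ Nat.succ_pos 2)
  refine ⟨b, hli, (eq_of_le_of_finrank_eq (span_le.2 ?_) ?_).symm⟩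
  · exact Set.insert_subset hb (Set.pair_subset ht hc)
  · rw [hrank, finrank_span_triple hli]

lemma linearIndependent_pair_meetInf {b t c : Fin 3 → K} (h : LinearIndependent K ![b, t, c])
    (hc : c 2 ≠ 0) : LinearIndependent K ![t, meetInf b c] := by
  refine LinearIndependent.pair_iff.2 fun x y hxy => ?_
  have hcoef := Fintype.linearIndependent_iff.1 h ![y * c 2, x, -(y * b 2)] (by
    simp only [Fin.sum_univ_three, Matrix.cons_val]
    rw [meetInf] at hxy
    linear_combination (norm := module) hxy)
  exact ⟨hcoef 1, (mul_eq_zero_iff_right hc).1 (hcoef 0)⟩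

lemma IsTangentSplash.exists_clubSpace {S : Set (PGPoint K)} {t : Fin 3 → K} {ht0 : t ≠ 0}
    (hS : IsTangentSplash F S (mk K t ht0)) :
    ∃ (s : Fin 3 → K) (B : Submodule F K), s 2 = 0 ∧ LinearIndependent K ![t, s] ∧
      finrank F B = 2 ∧ S = points K (clubSpace t s B) := by
  obtain ⟨π, hπ, hT, rfl⟩ := hS
  obtain ⟨htπ, ht⟩ : mk K t ht0 ∈ π ∩ linf K := hT ▸ rfl
  rw [mk_mem_linf] at ht
  obtain ⟨U, hU, hrank, htU, rfl⟩ := hπ.exists_form htπ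
  obtain ⟨c, hcU, htc⟩ := hU.exists_linearIndependent_pair (by omega) htU ht0
  obtain ⟨b, hbtc, rfl⟩ := hU.exists_eq_span_triple hrank htc htU hcU
  have hbc := (points_span_triple_inter_linf_eq_iff hbtc ht ht0).1 hT
  exact ⟨meetInf b c, span F {b 2, c 2}, meetInf_apply_two b c,
    linearIndependent_pair_meetInf hbtc (hbc.ne_zero 1), finrank_span_pair hbc,
    splash_points_span_triple ht (hT ▸ Set.subsingleton_singleton)⟩

lemma smul_clubSpace (a : K) (t s : V) (B : Submodule F K) :
    a • clubSpace t s B = clubSpace t (a • s) (a • B) := by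
  ext z
  simp only [mem_smul_pointwise_iff_exists, mem_clubSpace_iff]
  constructor
  · rintro ⟨-, ⟨β, hβ, x, rfl⟩, rfl⟩
    exact ⟨a • β, ⟨β, hβ, rfl⟩, x, by rw [smul_add, smul_eq_mul, mul_smul, smul_comm x a s]⟩
  · rintro ⟨-, ⟨β, hβ, rfl⟩, x, rfl⟩
    refine ⟨_, ⟨β, hβ, x, rfl⟩, ?_⟩
    rw [smul_add, smul_comm x a s, ← mul_smul]
    rfl

lemma mk_mem_points_clubSpace_iff {t s : V} (h : LinearIndependent K ![t, s]) {B : Submodule F K}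
    {β ξ : K} (hz0 : ξ • t + s ≠ 0) :
    mk K (ξ • t + s) hz0 ∈ points K (clubSpace t (β • t + s) B) ↔ ξ - β ∈ B := by
  simp only [mk_mem_points_iff, mem_clubSpace_iff]
  constructor
  · rintro ⟨a, ha, η, hη, x, hx⟩
    obtain ⟨hη', hxa⟩ := LinearIndependent.pair_iff.1 h (η + algebraMap F K x * β - a * ξ)
      (algebraMap F K x - a) (by
        rw [← algebraMap_smul K x] at hx
        linear_combination (norm := module) hx)
    obtain rfl : a = algebraMap F K x := (sub_eq_zero.1 hxa).symm
    have hx0 : x ≠ 0 := by simpa using ha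
    have hxη : x • (ξ - β) = η := by
      rw [Algebra.smul_def]
      linear_combination -hη'
    exact (B.smul_mem_iff hx0).1 (hxη ▸ hη)
  · exact fun hξ => ⟨1, one_ne_zero, _, hξ, 1, by module⟩

lemma points_clubSpace_eq_iff {t s : V} (h : LinearIndependent K ![t, s]) {B B' : Submodule F K}
    {β : K} : points K (clubSpace t (β • t + s) B') = points K (clubSpace t s B) ↔
      B' = B ∧ β ∈ B := by
  have hne : ∀ ξ : K, ξ • t + s ≠ 0 := fun ξ h0 =>
    one_ne_zero (LinearIndependent.pair_iff.1 h ξ 1 (by rwa [one_smul])).2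
  constructor
  · intro heq
    have hiff : ∀ ξ : K, ξ - β ∈ B' ↔ ξ ∈ B := by
      intro ξ
      rw [← mk_mem_points_clubSpace_iff h (hne ξ), heq]
      simpa using mk_mem_points_clubSpace_iff h (β := 0) (B := B) (hne ξ)
    have hβ : β ∈ B := (hiff β).1 (by simp)
    refine ⟨ext fun ξ => ?_, hβ⟩
    simpa [B.add_mem_iff_left hβ] using hiff (ξ + β)
  · rintro ⟨rfl, hβ⟩
    congr 1
    ext z
    simp only [mem_clubSpace_iff]
    constructor
    · rintro ⟨η, hη, x, rfl⟩
      exact ⟨η + x • β, add_mem hη (B'.smul_mem x hβ), x, by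
        rw [add_smul, smul_add, smul_assoc, add_assoc]⟩
    · rintro ⟨η, hη, x, rfl⟩
      exact ⟨η - x • β, sub_mem hη (B'.smul_mem x hβ), x, by
        rw [sub_smul, smul_add, smul_assoc]; abel⟩

lemma IsSubline.exists_eq_points_span_pair {q : ℕ} {m : Set (PGPoint K)} {T : PGPoint K}
    (hm : IsSubline F q m) (hTm : T ∈ m) (hT : T ∈ linf K) (hmn : ¬ m ⊆ linf K) :
    ∃ (t v : Fin 3 → K) (ht0 : t ≠ 0), t 2 = 0 ∧ v 2 = 1 ∧ T = mk K t ht0 ∧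
      m = points K (span F {t, v}) := by
  obtain ⟨π, ℓ, hπ, hℓ, -, rfl⟩ := hm
  obtain ⟨Q, ⟨hQπ, hQℓ⟩, hQinf⟩ := Set.not_subset.1 hmn
  obtain ⟨v, hv0, hv2, rfl⟩ : ∃ (v : Fin 3 → K) (hv0 : v ≠ 0), v 2 = 1 ∧ Q = mk K v hv0 := by
    induction Q using Projectivization.ind with | h z hz =>
    rw [mk_mem_linf] at hQinf
    exact ⟨(z 2)⁻¹ • z, smul_ne_zero (inv_ne_zero hQinf) hz, inv_mul_cancel₀ hQinf,
      (mk_eq_mk_iff' _ _ _ _ _).2 ⟨z 2, smul_inv_smul₀ hQinf z⟩⟩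
  obtain ⟨U, hU, -, hvU, rfl⟩ := hπ.exists_form hQπ
  obtain ⟨⟨t, htU, ht0, rfl⟩, htℓ⟩ := hTm
  have hli : LinearIndependent K ![t, v] :=
    (linearIndependent_pair_iff_mk_ne ht0 hv0).2 fun h => hQinf (h ▸ hT)
  refine ⟨t, v, ht0, (mk_mem_linf ht0).1 hT, hv2, rfl, Set.Subset.antisymm ?_ fun P hP => ?_⟩
  · rintro - ⟨⟨u, hu, hu0, rfl⟩, huℓ⟩
    rw [hℓ.mem_iff_of_mem hli htℓ hQℓ, hU.mem_span_iff (Set.pair_subset htU hvU) hu] at huℓ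
    exact mk_mem_points huℓ hu0
  · obtain ⟨u, hu, hu0, rfl⟩ := hP
    exact ⟨mk_mem_points (span_le.2 (Set.pair_subset htU hvU) hu) hu0,
      (hℓ.mem_iff_of_mem hli htℓ hQℓ hu0).2 (span_le_restrictScalars F K _ hu)⟩

end TangentSplashes

section SubplanesThroughSubline

variable {F K V : Type*} [Field F] [Field K] [Algebra F K] [AddCommGroup V] [Module K V]
  [Module F V] [IsScalarTower F K V]

lemma ncard_eq_ncard_mul_of_fiber {α β : Type*} {A : Set α} {B : Set β} {f : α → β}
    (hf : Set.MapsTo f A B) {k : ℕ} (hk : k ≠ 0) (hfib : ∀ b ∈ B, {a ∈ A | f a = b}.ncard = k) :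
    A.ncard = B.ncard * k := by
  have fiber_equiv : ∀ b : B, Nonempty ({a : A // hf.restrict f A B a = b} ≃ Fin k) := by
    rintro ⟨b, hb⟩
    have hcard : Nat.card {a : A // hf.restrict f A B a = ⟨b, hb⟩} = k := by
      rw [← hfib b hb, ← Nat.card_coe_set_eq]
      exact Nat.card_congr ((Equiv.subtypeEquivRight fun a => Subtype.ext_iff).trans
        (Equiv.subtypeSubtypeEquivSubtypeInter (· ∈ A) (f · = b)))
    exact ⟨hcard ▸ Nat.equivFinOfCardPos (hcard.symm ▸ hk)⟩
  rw [← Nat.card_coe_set_eq, ← Nat.card_coe_set_eq, ← Nat.card_fin k, ← Nat.card_prod]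
  exact Nat.card_congr ((Equiv.sigmaFiberEquiv (hf.restrict f A B)).symm.trans
    ((Equiv.sigmaCongrRight fun b => (fiber_equiv b).some).trans (Equiv.sigmaEquivProd B (Fin k))))

lemma setOf_points_span_triple_eq {w t v : V} (h : LinearIndependent K ![w, t, v]) :
    {w' | LinearIndependent K ![w', t, v] ∧
        points K (span F {w', t, v}) = points K (span F {w, t, v})} =
      (span F {w, t, v} : Set V) \ span F {t, v} := by
  have hU : IsForm K (span F {w, t, v}) := isForm_span_triple h
  have htU : t ∈ span F {w, t, v} := subset_span (by simp)
  have hvU : v ∈ span F {w, t, v} := subset_span (by simp)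
  ext w'
  constructor
  · rintro ⟨hw', hpts⟩
    have hw'K : w' ∉ span K {t, v} := (linearIndependent_triple_iff.1 hw').2
    have htw' : LinearIndependent K ![t, w'] :=
      (LinearIndependent.pair_iff' (hw'.ne_zero 1)).2 fun a ha =>
        hw'K (ha ▸ smul_mem _ a (subset_span (by simp)))
    exact ⟨hU.mem_of_points_subset hpts.subset htw' htU (subset_span (by simp))
      (subset_span (by simp)), fun hmem => hw'K (span_le_restrictScalars F K _ hmem)⟩
  · rintro ⟨hw', hmem⟩
    have hw'li : LinearIndependent K ![w', t, v] := linearIndependent_triple_iff.2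
      ⟨(linearIndependent_triple_iff.1 h).1, fun hK =>
        hmem ((hU.mem_span_iff (Set.pair_subset htU hvU) hw').1 hK)⟩
    have : FiniteDimensional F (span F {w, t, v}) :=
      FiniteDimensional.span_of_finite F (Set.toFinite _)
    refine ⟨hw'li, congrArg _ (eq_of_le_of_finrank_eq (span_le.2 ?_) ?_)⟩
    · exact Set.insert_subset hw' (Set.pair_subset htU hvU)
    · rw [finrank_span_triple hw'li, finrank_span_triple h]

lemma natCard_span_range [Finite F] {ι : Type*} [Fintype ι] {b : ι → V}
    (hb : LinearIndependent K b) :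
    Nat.card (span F (Set.range b)) = Nat.card F ^ Fintype.card ι := by
  have := FiniteDimensional.span_of_finite F (Set.finite_range b)
  rw [Module.natCard_eq_pow_finrank (K := F), finrank_span_range hb]

lemma ncard_span_triple_sdiff_span_pair [Finite F] {w t v : V}
    (h : LinearIndependent K ![w, t, v]) :
    ((span F {w, t, v} : Set V) \ span F {t, v}).ncard = Nat.card F ^ 3 - Nat.card F ^ 2 := by
  have := FiniteDimensional.span_of_finite F (Set.toFinite {t, v})
  have := Module.finite_of_finite F (M := span F {t, v})
  have hpair := natCard_span_range (F := F) (linearIndependent_triple_iff.1 h).1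
  have htriple := natCard_span_range (F := F) h
  rw [Matrix.range_cons_cons_empty, Fintype.card_fin] at hpair
  rw [range_triple, Fintype.card_fin] at htriple
  rw [Set.ncard_sdiff (span_mono (Set.subset_insert w _)) (Set.toFinite (span F {t, v} : Set V)),
    ← hpair, ← htriple]
  rfl

lemma IsSubplane.exists_eq_points_span_triple {π : Set (PGPoint K)} (hπ : IsSubplane F π)
    {t v : Fin 3 → K} (h : LinearIndependent K ![t, v]) (hm : points K (span F {t, v}) ⊆ π) :
    ∃ w, LinearIndependent K ![w, t, v] ∧ points K (span F {w, t, v}) = π := by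
  have ht : t ∈ span F {t, v} := subset_span (by simp)
  have hv : v ∈ span F {t, v} := subset_span (by simp)
  obtain ⟨U, hU, hrank, htU, rfl⟩ := hπ.exists_form (hm (mk_mem_points ht (h.ne_zero 0)))
  have hvU : v ∈ U := hU.mem_of_points_subset hm h htU ht hv
  obtain ⟨w, hw, rfl⟩ := hU.exists_eq_span_triple hrank h htU hvU
  exact ⟨w, hw, rfl⟩

lemma ncard_setOf_points_span_triple_mem [Finite F] {t v : Fin 3 → K}
    (h : LinearIndependent K ![t, v]) {𝒜 : Set (Set (PGPoint K))}
    (h𝒜 : ∀ π ∈ 𝒜, IsSubplane F π ∧ points K (span F {t, v}) ⊆ π) :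
    {w | LinearIndependent K ![w, t, v] ∧ points K (span F {w, t, v}) ∈ 𝒜}.ncard =
      𝒜.ncard * (Nat.card F ^ 3 - Nat.card F ^ 2) := by
  refine ncard_eq_ncard_mul_of_fiber (f := fun w => points K (span F {w, t, v}))
    (fun w hw => hw.2) ?_ fun π hπ => ?_
  · exact (Nat.sub_pos_of_lt (Nat.pow_lt_pow_right Finite.one_lt_card (by decide))).ne'
  · obtain ⟨w, hw, rfl⟩ := (h𝒜 π hπ).1.exists_eq_points_span_triple h (h𝒜 π hπ).2
    rw [← ncard_span_triple_sdiff_span_pair hw, ← setOf_points_span_triple_eq hw]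
    congr 1
    ext w'
    exact ⟨fun hw' => ⟨hw'.1.1, hw'.2⟩, fun hw' => ⟨⟨hw'.1, hw'.2.symm ▸ hπ⟩, hw'.2⟩⟩

end SubplanesThroughSubline

section Chart

variable {F K V : Type*} [Field F] [Field K] [Algebra F K] [AddCommGroup V] [Module K V]

/-- The chart `(β, y, z) ↦ y⁻¹ (β t + s + z v)` for the vectors outside the `K`-span of `t` and `v`,
with coordinates chosen so that, for `t` and `s` on `ℓ∞` and `v 2 = 1`, a tangent subplane spanned
over `F` by such a vector, `t` and `v` has its splash determined by `β` and `span F {y, z}`. -/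
def chart (t s v : V) (β y z : K) : V := y⁻¹ • (β • t + s + z • v)

lemma linearIndependent_chart {t s v : V} (h : LinearIndependent K ![s, t, v]) {β y z : K}
    (hy : y ≠ 0) : LinearIndependent K ![chart t s v β y z, t, v] := by
  obtain ⟨htv, hs⟩ := linearIndependent_triple_iff.1 h
  refine linearIndependent_triple_iff.2 ⟨htv, fun hmem => hs ?_⟩
  have ht : t ∈ span K {t, v} := subset_span (by simp)
  have hv : v ∈ span K {t, v} := subset_span (by simp)
  rwa [chart, smul_mem_iff _ (inv_ne_zero hy), add_mem_cancel_right (smul_mem _ z hv),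
    add_mem_cancel_left (smul_mem _ β ht)] at hmem

lemma chart_inj {t s v : V} (h : LinearIndependent K ![s, t, v]) {β y z β' y' z' : K}
    (hy : y ≠ 0) (hy' : y' ≠ 0) (heq : chart t s v β y z = chart t s v β' y' z') :
    β = β' ∧ y = y' ∧ z = z' := by
  have hcoef := Fintype.linearIndependent_iff.1 h
    ![y⁻¹ - y'⁻¹, y⁻¹ * β - y'⁻¹ * β', y⁻¹ * z - y'⁻¹ * z'] (by
      simp only [Fin.sum_univ_three, Matrix.cons_val]
      simp only [chart] at heq
      linear_combination (norm := module) heq)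
  obtain rfl : y = y' := inv_injective (sub_eq_zero.1 (hcoef 0))
  exact ⟨mul_left_cancel₀ (inv_ne_zero hy) (sub_eq_zero.1 (hcoef 1)), rfl,
    mul_left_cancel₀ (inv_ne_zero hy) (sub_eq_zero.1 (hcoef 2))⟩

lemma exists_eq_chart {t s v w : V} (hdim : finrank K V = 3)
    (h : LinearIndependent K ![s, t, v]) (hw : LinearIndependent K ![w, t, v]) :
    ∃ β y z : K, y ≠ 0 ∧ w = chart t s v β y z := by
  have hspan : span K {s, t, v} = ⊤ :=
    range_triple s t v ▸ h.span_eq_top_of_card_eq_finrank (by rw [Fintype.card_fin, hdim])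
  obtain ⟨y, x, z, rfl⟩ := mem_span_triple.1 (hspan ▸ mem_top : w ∈ span K {s, t, v})
  have hy : y ≠ 0 := by
    rintro rfl
    exact (linearIndependent_triple_iff.1 hw).2 (mem_span_pair.2 ⟨x, z, by module⟩)
  refine ⟨y⁻¹ * x, y⁻¹, y⁻¹ * z, inv_ne_zero hy, ?_⟩
  rw [chart, inv_inv, mul_smul, mul_smul, smul_add, smul_add, smul_inv_smul₀ hy, smul_inv_smul₀ hy]
  abel

lemma linearIndependent_of_apply_two {t s v : Fin 3 → K} (h : LinearIndependent K ![t, s])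
    (ht : t 2 = 0) (hs : s 2 = 0) (hv : v 2 ≠ 0) : LinearIndependent K ![s, t, v] := by
  refine Fintype.linearIndependent_iff.2 fun g hg => ?_
  have hg2 : g 2 = 0 := by
    simpa [Fin.sum_univ_three, ht, hs, hv] using congrFun hg 2
  obtain ⟨hg1, hg0⟩ := LinearIndependent.pair_iff.1 h (g 1) (g 0) (by
    simpa [Fin.sum_univ_three, hg2, add_comm] using hg)
  exact Fin.forall_fin_succ.2 ⟨hg0, Fin.forall_fin_two.2 ⟨hg1, hg2⟩⟩

lemma chart_apply_two {t s v : Fin 3 → K} (ht : t 2 = 0) (hs : s 2 = 0) (hv : v 2 = 1)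
    (β y z : K) : chart t s v β y z 2 = y⁻¹ * z := by
  simp [chart, ht, hs, hv]

lemma meetInf_chart {t s v : Fin 3 → K} (ht : t 2 = 0) (hs : s 2 = 0) (hv : v 2 = 1)
    (β y z : K) : meetInf (chart t s v β y z) v = y⁻¹ • (β • t + s) := by
  rw [meetInf, chart_apply_two ht hs hv, hv, chart]
  module

lemma clubSpace_chart {t s v : Fin 3 → K} (ht : t 2 = 0) (hs : s 2 = 0) (hv : v 2 = 1)
    {β y z : K} (hy : y ≠ 0) :
    clubSpace t (meetInf (chart t s v β y z) v) (span F {chart t s v β y z 2, v 2}) =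
      y⁻¹ • clubSpace t (β • t + s) (span F {y, z}) := by
  rw [meetInf_chart ht hs hv, chart_apply_two ht hs hv, hv, smul_clubSpace, smul_span,
    Set.pair_comm y z]
  congr! 2
  simp [← Set.image_smul, Set.image_pair, hy]

lemma linearIndependent_pair_of_finrank_span {y z : V} (h : finrank K (span K {y, z}) = 2) :
    LinearIndependent K ![y, z] := by
  rw [linearIndependent_iff_card_eq_finrank_span, Set.finrank, Matrix.range_cons_cons_empty, h,
    Fintype.card_fin]

lemma points_span_chart_inter_linf_eq_iff {t s v : Fin 3 → K} (h : LinearIndependent K ![s, t, v])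
    (ht : t 2 = 0) (hs : s 2 = 0) (hv : v 2 = 1) (ht0 : t ≠ 0) {β y z : K} (hy : y ≠ 0) :
    points K (span F {chart t s v β y z, t, v}) ∩ linf K = {mk K t ht0} ↔
      LinearIndependent F ![y, z] := by
  have hsmul : ∀ i k : F, i • (y⁻¹ * z) + k • (1 : K) = y⁻¹ * (i • z + k • y) := fun i k => by
    rw [mul_add, mul_smul_comm, mul_smul_comm, inv_mul_cancel₀ hy]
  rw [points_span_triple_inter_linf_eq_iff (linearIndependent_chart h hy) ht,
    chart_apply_two ht hs hv, hv, LinearIndependent.pair_symm_iff (x := y),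
    LinearIndependent.pair_iff, LinearIndependent.pair_iff]
  simp only [hsmul, mul_eq_zero, inv_eq_zero, hy, false_or]

lemma splash_points_span_chart {t s v : Fin 3 → K} (ht : t 2 = 0) (hs : s 2 = 0) (hv : v 2 = 1)
    {β y z : K} (hy : y ≠ 0)
    (h : (points K (span F {chart t s v β y z, t, v}) ∩ linf K).Subsingleton) :
    splash (points K (span F {chart t s v β y z, t, v})) =
      points K (clubSpace t (β • t + s) (span F {y, z})) := by
  rw [splash_points_span_triple ht h, clubSpace_chart ht hs hv hy, points_smul (inv_ne_zero hy)]

lemma tangent_and_splash_eq_iff {t s v : Fin 3 → K} (hts : LinearIndependent K ![t, s])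
    (ht : t 2 = 0) (hs : s 2 = 0) (hv : v 2 = 1) {B : Submodule F K} (hB : finrank F B = 2)
    {β y z : K} (hy : y ≠ 0) :
    ((∃ T', points K (span F {chart t s v β y z, t, v}) ∩ linf K = {T'}) ∧
        splash (points K (span F {chart t s v β y z, t, v})) = points K (clubSpace t s B)) ↔
      span F {y, z} = B ∧ β ∈ B := by
  have hstv := linearIndependent_of_apply_two hts ht hs (v := v) (hv ▸ one_ne_zero)
  constructor
  · rintro ⟨⟨T', hT'⟩, hS⟩
    rw [splash_points_span_chart ht hs hv hy (hT' ▸ Set.subsingleton_singleton)] at hS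
    exact (points_clubSpace_eq_iff hts).1 hS
  · rintro ⟨rfl, hβ⟩
    have hT := (points_span_chart_inter_linf_eq_iff hstv ht hs hv (hts.ne_zero 0) (β := β) hy).2
      (linearIndependent_pair_of_finrank_span hB)
    refine ⟨⟨_, hT⟩, ?_⟩
    rw [splash_points_span_chart ht hs hv hy (hT ▸ Set.subsingleton_singleton)]
    exact (points_clubSpace_eq_iff hts).2 ⟨rfl, hβ⟩

end Chart

section Counting

lemma ncard_setOf_span_pair_eq {F V : Type*} [Field F] [Finite F] [AddCommGroup V] [Module F V]
    {B : Submodule F V} (hB : finrank F B = 2) :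
    {p : V × V | span F {p.1, p.2} = B}.ncard =
      (Nat.card F ^ 2 - 1) * (Nat.card F ^ 2 - Nat.card F) := by
  have := FiniteDimensional.of_finrank_pos (hB ▸ two_pos)
  have := Module.finite_of_finite F (M := B)
  have := Fintype.ofFinite F
  have := Fintype.ofFinite B
  let toPair : {r : Fin 2 → B // LinearIndependent F r} → V × V := fun r => (r.1 0, r.1 1)
  have hinj : Function.Injective toPair := by
    rintro ⟨r, hr⟩ ⟨r', hr'⟩ h
    simp only [toPair, Prod.mk.injEq, Subtype.coe_inj] at h
    exact Subtype.ext (funext (Fin.forall_fin_two.2 h))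
  have hli : ∀ r : Fin 2 → B, LinearIndependent F r ↔ LinearIndependent F ![(r 0 : V), r 1] :=
    fun r => by
      have hr : B.subtype ∘ r = ![(r 0 : V), r 1] := funext (Fin.forall_fin_two.2 ⟨rfl, rfl⟩)
      rw [← LinearMap.linearIndependent_iff B.subtype B.ker_subtype, hr]
  have hrange : Set.range toPair = {p | span F {p.1, p.2} = B} := by
    ext ⟨y, z⟩
    constructor
    · rintro ⟨⟨r, hr⟩, ⟨⟩⟩
      exact eq_of_le_of_finrank_eq (span_le.2 (Set.pair_subset (r 0).2 (r 1).2))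
        (by rw [finrank_span_pair ((hli r).1 hr), hB])
    · rintro rfl
      exact ⟨⟨![⟨y, subset_span (by simp)⟩, ⟨z, subset_span (by simp)⟩],
        (hli _).2 (linearIndependent_pair_of_finrank_span hB)⟩, rfl⟩
  rw [← hrange, Set.ncard_range_of_injective hinj, card_linearIndependent hB.ge, hB,
    Fin.prod_univ_two, Nat.card_eq_fintype_card, Fin.val_zero, Fin.val_one, pow_zero, pow_one]

variable {F K : Type*} [Field F] [Field K] [Algebra F K] [Finite F]

lemma ncard_setOf_tangent_and_splash_eq {t s v : Fin 3 → K} (hts : LinearIndependent K ![t, s])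
    (ht : t 2 = 0) (hs : s 2 = 0) (hv : v 2 = 1) {B : Submodule F K} (hB : finrank F B = 2) :
    {w | LinearIndependent K ![w, t, v] ∧
        (∃ T', points K (span F {w, t, v}) ∩ linf K = {T'}) ∧
        splash (points K (span F {w, t, v})) = points K (clubSpace t s B)}.ncard =
      Nat.card F ^ 2 * ((Nat.card F ^ 2 - 1) * (Nat.card F ^ 2 - Nat.card F)) := by
  have hstv := linearIndependent_of_apply_two hts ht hs (v := v) (hv ▸ one_ne_zero)
  have hne : ∀ {y z : K}, span F {y, z} = B → y ≠ 0 := fun hyz =>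
    (linearIndependent_pair_of_finrank_span (hyz ▸ hB)).ne_zero 0
  have hinj : Set.InjOn (fun p : K × K × K => chart t s v p.1 p.2.1 p.2.2)
      ((B : Set K) ×ˢ {p | span F {p.1, p.2} = B}) := by
    rintro ⟨β, y, z⟩ ⟨-, hyz⟩ ⟨β', y', z'⟩ ⟨-, hyz'⟩ h
    obtain ⟨rfl, rfl, rfl⟩ := chart_inj hstv (hne hyz) (hne hyz') h
    rfl
  have himage : (fun p : K × K × K => chart t s v p.1 p.2.1 p.2.2) ''
      ((B : Set K) ×ˢ {p | span F {p.1, p.2} = B}) = {w | LinearIndependent K ![w, t, v] ∧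
        (∃ T', points K (span F {w, t, v}) ∩ linf K = {T'}) ∧
        splash (points K (span F {w, t, v})) = points K (clubSpace t s B)} := by
    ext w
    constructor
    · rintro ⟨⟨β, y, z⟩, ⟨hβ, hyz⟩, rfl⟩
      exact ⟨linearIndependent_chart hstv (hne hyz),
        (tangent_and_splash_eq_iff hts ht hs hv hB (hne hyz)).2 ⟨hyz, hβ⟩⟩
    · rintro ⟨hw, hπ⟩
      obtain ⟨β, y, z, hy, rfl⟩ := exists_eq_chart (finrank_fin_fun K) hstv hw
      obtain ⟨hyz, hβ⟩ := (tangent_and_splash_eq_iff hts ht hs hv hB hy).1 hπ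
      exact ⟨⟨β, y, z⟩, ⟨hβ, hyz⟩, rfl⟩
  have := FiniteDimensional.of_finrank_pos (hB ▸ two_pos)
  rw [← himage, hinj.ncard_image, Set.ncard_prod, ncard_setOf_span_pair_eq hB, ← hB,
    ← Module.natCard_eq_pow_finrank]
  rfl

lemma ncard_tangent_subplanes_mul {t s v : Fin 3 → K} (hts : LinearIndependent K ![t, s])
    (ht : t 2 = 0) (hs : s 2 = 0) (hv : v 2 = 1) {B : Submodule F K} (hB : finrank F B = 2) :
    {π : Set (PGPoint K) | IsSubplane F π ∧ (∃ T', π ∩ linf K = {T'}) ∧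
        points K (span F {t, v}) ⊆ π ∧ splash π = points K (clubSpace t s B)}.ncard *
      (Nat.card F ^ 3 - Nat.card F ^ 2) =
    Nat.card F ^ 2 * ((Nat.card F ^ 2 - 1) * (Nat.card F ^ 2 - Nat.card F)) := by
  have hstv := linearIndependent_of_apply_two hts ht hs (v := v) (hv ▸ one_ne_zero)
  rw [← ncard_setOf_tangent_and_splash_eq hts ht hs hv hB, ← ncard_setOf_points_span_triple_mem
    (linearIndependent_triple_iff.1 hstv).1 fun π hπ => ⟨hπ.1, hπ.2.2.1⟩]
  congr 1
  ext w
  refine and_congr_right fun hw => ⟨fun h => ⟨h.2.1, h.2.2.2⟩, fun h => ?_⟩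
  exact ⟨isSubplane_points_span_triple hw, h.1,
    points_mono (span_mono (Set.subset_insert w _)), h.2⟩

theorem statement12_general {q : ℕ} (hq : Nat.card F = q) {S : Set (PGPoint K)} {T : PGPoint K}
    (hS : IsTangentSplash F S T) {m : Set (PGPoint K)} (hm : IsSubline F q m) (hTm : T ∈ m)
    (hmn : ¬ m ⊆ linf K) :
    {π : Set (PGPoint K) | IsSubplane F π ∧ (∃ T' : PGPoint K, π ∩ linf K = {T'}) ∧
      m ⊆ π ∧ splash π = S}.ncard = q * (q ^ 2 - 1) := by
  have hT : T ∈ linf K := by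
    obtain ⟨π, -, hπT, -⟩ := hS
    exact (hπT ▸ rfl : T ∈ π ∩ linf K).2
  obtain ⟨t, v, ht0, ht, hv, rfl, rfl⟩ := hm.exists_eq_points_span_pair hTm hT hmn
  obtain ⟨s, B, hs, hts, hB, rfl⟩ := hS.exists_clubSpace
  have hcount := ncard_tangent_subplanes_mul hts ht hs hv hB
  have hq1 : 1 < q := hq ▸ Finite.one_lt_card
  have hpos : 0 < q ^ 3 - q ^ 2 := Nat.sub_pos_of_lt (Nat.pow_lt_pow_right hq1 (by decide))
  have hfactor : q ^ 3 - q ^ 2 = q * (q ^ 2 - q) := by rw [Nat.mul_sub]; ring_nf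
  refine Nat.eq_of_mul_eq_mul_right hpos ?_
  rw [hq] at hcount
  rw [hcount, hfactor]
  ring

end Counting

end

/-- given a tangent splash `S` with centre `T` and an order-`q`-subline
`m` through `T` not contained in `ℓ∞`, the number of order-`q`-subplanes tangent to
`ℓ∞` containing `m` with tangent splash `S` is `q(q²−1)`. -/
theorem statement12 (q : ℕ) (F K : Type) [Field F] [Field K] [Fintype F] [Fintype K]
    [Algebra F K] (hF : Fintype.card F = q) (hK : Fintype.card K = q ^ 3)
    (S : Set (PGPoint K)) (T : PGPoint K) (hS : IsTangentSplash F S T)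
    (m : Set (PGPoint K)) (hm : IsSubline F q m) (hTm : T ∈ m) (hmn : ¬ m ⊆ linf K) :
    {π : Set (PGPoint K) | IsSubplane F π ∧ (∃ T' : PGPoint K, π ∩ linf K = {T'}) ∧
      m ⊆ π ∧ splash π = S}.ncard = q * (q ^ 2 - 1) := by
  exact statement12_general (Nat.card_eq_fintype_card.trans hF) hS hm hTm hmn

end TangentSplashPaper
end

section
/- Let q be a prime power and suppose a set S of q²+1 points of ℓ∞ in PG(2,q³) is a tangent splash with centre T and also a tangent splash with centre U (i.e. S is the tangent splash of an order-q-subplane tangent to ℓ∞ at T, and also of an order-q-subplane tangent to ℓ∞ at U). Then T = U; that is, a tangent splash has a unique centre. -/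
namespace TangentSplashPaper

open Projectivization

/-!
Write a tangent splash as the splash of the image of `PG(2,F)` under `f`, normalised so that
`f e₀` represents the centre `T`. A point `[x]` of `ℓ∞` lies on a line spanned by two points of the
subplane iff the three entries of `f⁻¹ x` are linearly dependent over `F`. Hence, in an affine
coordinate on `ℓ∞` with `T` at infinity and another point of the splash as origin, the splash is a
two-dimensional `F`-subspace `V` of `K`. If a second point `U` is also a centre, exchanging `T` and
`U` inverts the coordinate, so the inverses of the nonzero elements of `V` lie in a two-dimensional
subspace too. For a basis `α, β` of `V` this makes `α⁻¹`, `β⁻¹` and `(α + β)⁻¹` dependent, which is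
a quadratic equation for `α / β ∉ F`; an extension of odd degree has no element of degree two.

Absence of elements of degree two is what matters: when `t` has degree two, `V = F(t)` is closed
under inversion, and every point of the corresponding splash is a centre.
-/

section Projectivization

variable {K V : Type*} [Field K] [AddCommGroup V] [Module K V]

lemma mem_submodule_iff_eq_mk {P : Projectivization K V} {v : V} (hv : v ≠ 0) :
    v ∈ P.submodule ↔ P = mk K v hv := by
  induction P with
  | h w hw => rw [submodule_mk, Submodule.mem_span_singleton, eq_comm, mk_eq_mk_iff']

lemma mk_submodule_le_iff {v : V} (hv : v ≠ 0) {W : Submodule K V} :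
    (mk K v hv).submodule ≤ W ↔ v ∈ W := by
  rw [submodule_mk, Submodule.span_singleton_le_iff_mem]

lemma linearIndependent_fin_two_iff_mk_ne {w : Fin 2 → V} (h₀ : w 0 ≠ 0) (h₁ : w 1 ≠ 0) :
    LinearIndependent K w ↔ mk K (w 0) h₀ ≠ mk K (w 1) h₁ := by
  have hw : ![w 0, w 1] = w := by ext i; fin_cases i <;> rfl
  rw [ne_comm, Ne, mk_eq_mk_iff', not_exists, ← LinearIndependent.pair_iff' h₀, hw]

end Projectivization

section LinearDependence

variable {F K V V' : Type*} [Field F] [Field K] [Algebra F K]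
  [AddCommGroup V] [Module K V] [AddCommGroup V'] [Module K V']

lemma add_ne_zero_of_linearIndependent {R M : Type*} [Ring R] [Nontrivial R] [AddCommGroup M]
    [Module R M] {x y : M} (h : LinearIndependent R ![x, y]) : x + y ≠ 0 :=
  fun hxy ↦ one_ne_zero (LinearIndependent.pair_iff.mp h 1 1 (by simpa only [one_smul] using hxy)).1

lemma mem_span_range_comp_iff {ι : Type*} (f : V ≃ₗ[K] V') {w : ι → V} {x : V'} :
    x ∈ Submodule.span K (Set.range (f ∘ w)) ↔ f.symm x ∈ Submodule.span K (Set.range w) := by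
  rw [Set.range_comp, ← f.coe_coe, ← Submodule.map_span, Submodule.mem_map_equiv]

lemma linearIndependent_map_algebraMap_comp_iff {ι κ : Type*} [Finite κ]
    (f : (κ → K) ≃ₗ[K] V) {v : ι → κ → F} :
    LinearIndependent K (f ∘ fun i ↦ algebraMap F K ∘ v i) ↔ LinearIndependent F v :=
  (f.toLinearMap.linearIndependent_iff f.ker).trans linearIndependent_algebraMap_comp_iff

lemma algebraMap_comp_ne_zero {ι : Type*} {p : ι → F} (hp : p ≠ 0) : algebraMap F K ∘ p ≠ 0 := by
  obtain ⟨i, hi⟩ := Function.ne_iff.mp hp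
  exact Function.ne_iff.mpr ⟨i, (map_ne_zero (algebraMap F K)).mpr hi⟩

lemma finrank_ker_dotProductEquiv {n : ℕ} {m : Fin (n + 1) → F} (hm : m ≠ 0) :
    Module.finrank F (LinearMap.ker (dotProductEquiv F (Fin (n + 1)) m)) = n := by
  have := Module.Dual.finrank_ker_add_one_of_ne_zero
    ((dotProductEquiv F (Fin (n + 1))).map_ne_zero_iff.mpr hm)
  rwa [Module.finrank_fin_fun, Nat.add_right_cancel_iff] at this

lemma exists_linearIndependent_dotProduct_eq_zero {n : ℕ} {m : Fin (n + 1) → F} (hm : m ≠ 0) :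
    ∃ v : Fin n → Fin (n + 1) → F, LinearIndependent F v ∧ ∀ i, m ⬝ᵥ v i = 0 := by
  let H := LinearMap.ker (dotProductEquiv F (Fin (n + 1)) m)
  let b : Module.Basis (Fin n) F H :=
    Module.finBasisOfFinrankEq F H (finrank_ker_dotProductEquiv hm)
  exact ⟨H.subtype ∘ b, b.linearIndependent.map' H.subtype H.ker_subtype,
    fun i ↦ LinearMap.mem_ker.mp (b i).2⟩

lemma mem_span_of_dotProduct_eq_zero {n : ℕ} {m y : Fin (n + 1) → F} {v : Fin n → Fin (n + 1) → F}
    (hv : LinearIndependent F v) (hm : m ≠ 0) (hmv : ∀ i, m ⬝ᵥ v i = 0) (hmy : m ⬝ᵥ y = 0) :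
    y ∈ Submodule.span F (Set.range v) := by
  have hspan : Submodule.span F (Set.range v) =
      LinearMap.ker (dotProductEquiv F (Fin (n + 1)) m) := by
    apply Submodule.eq_of_le_of_finrank_eq
    · exact Submodule.span_le.mpr (Set.range_subset_iff.mpr hmv)
    · rw [finrank_span_eq_card hv, Fintype.card_fin, finrank_ker_dotProductEquiv hm]
  exact hspan ▸ hmy

theorem not_linearIndependent_iff_exists_mem_span {n : ℕ} {y : Fin (n + 1) → K} :
    ¬ LinearIndependent F y ↔ ∃ v : Fin n → Fin (n + 1) → F, LinearIndependent F v ∧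
      y ∈ Submodule.span K (Set.range fun i ↦ algebraMap F K ∘ v i) := by
  constructor
  · intro hy
    obtain ⟨m, hmy, i, hmi⟩ := Fintype.not_linearIndependent_iff.mp hy
    have hm : m ≠ 0 := Function.ne_iff.mpr ⟨i, hmi⟩
    obtain ⟨v, hv, hmv⟩ := exists_linearIndependent_dotProduct_eq_zero hm
    refine ⟨v, hv, mem_span_of_dotProduct_eq_zero (linearIndependent_algebraMap_comp_iff.mpr hv)
      (algebraMap_comp_ne_zero hm) (fun i ↦ ?_) ?_⟩
    · rw [← RingHom.map_dotProduct, hmv, map_zero]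
    · simpa only [dotProduct, Algebra.smul_def, Function.comp_apply] using hmy
  · rintro ⟨v, -, hy⟩ hind
    obtain ⟨c, rfl⟩ := (Submodule.mem_span_range_iff_exists_fun K).mp hy
    have hle : Submodule.span F (Set.range (∑ j, c j • (algebraMap F K ∘ v j))) ≤
        Submodule.span F (Set.range c) := by
      rw [Submodule.span_le, Set.range_subset_iff]
      intro i
      refine (Submodule.mem_span_range_iff_exists_fun F).mpr ⟨fun j ↦ v j i, ?_⟩
      simp [Algebra.smul_def, mul_comm]
    have := FiniteDimensional.span_of_finite F (Set.finite_range c)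
    have hcard := (Submodule.finrank_mono hle).trans (finrank_range_le_card c)
    rw [finrank_span_eq_card hind, Fintype.card_fin, Fintype.card_fin] at hcard
    omega

end LinearDependence

section Splash

variable {F K : Type*} [Field F] [Field K] [Algebra F K]

lemma mk_mem_linf_iff {x : Fin 3 → K} (hx : x ≠ 0) : mk K x hx ∈ linf K ↔ x 2 = 0 := by
  obtain ⟨a, ha⟩ := exists_smul_eq_mk_rep K x hx
  rw [linf, Set.mem_ofPred_eq, ← ha, Pi.smul_apply, smul_eq_zero_iff_eq]

lemma apply_two_eq_zero_of_mem_linf {P : PGPoint K} (hP : P ∈ linf K) {x : Fin 3 → K}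
    (hx : x ∈ P.submodule) : x 2 = 0 := by
  rcases eq_or_ne x 0 with rfl | hx₀
  · rfl
  · rwa [(mem_submodule_iff_eq_mk hx₀).mp hx, mk_mem_linf_iff] at hP

lemma exists_isLine_mem_iff {w : Fin 2 → Fin 3 → K} (hw : LinearIndependent K w)
    {x : Fin 3 → K} (hx : x ≠ 0) :
    (∃ ℓ, IsLine ℓ ∧ mk K (w 0) (hw.ne_zero 0) ∈ ℓ ∧ mk K (w 1) (hw.ne_zero 1) ∈ ℓ ∧
      mk K x hx ∈ ℓ) ↔ x ∈ Submodule.span K (Set.range w) := by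
  have hfinrank : Module.finrank K (Submodule.span K (Set.range w)) = 2 := by
    rw [finrank_span_eq_card hw, Fintype.card_fin]
  constructor
  · rintro ⟨_, ⟨W, hW, rfl⟩, h₀, h₁, hxW⟩
    rw [Set.mem_ofPred_eq, mk_submodule_le_iff] at h₀ h₁ hxW
    have hle : Submodule.span K (Set.range w) ≤ W :=
      Submodule.span_le.mpr (Set.range_subset_iff.mpr (Fin.forall_fin_two.mpr ⟨h₀, h₁⟩))
    rwa [Submodule.eq_of_le_of_finrank_eq hle (hfinrank.trans hW.symm)]
  · intro hxw
    refine ⟨_, ⟨_, hfinrank, rfl⟩, ?_⟩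
    simp only [Set.mem_ofPred_eq, mk_submodule_le_iff]
    exact ⟨Submodule.subset_span ⟨0, rfl⟩, Submodule.subset_span ⟨1, rfl⟩, hxw⟩

lemma mem_basePlane_iff {P : PGPoint K} : P ∈ basePlane F K ↔
    ∃ (p : Fin 3 → F) (hp : p ≠ 0), P = mk K (algebraMap F K ∘ p) (algebraMap_comp_ne_zero hp) := by
  constructor
  · rintro ⟨v, hv, rfl, hvF⟩
    choose p hp using hvF
    obtain rfl : algebraMap F K ∘ p = v := funext hp
    exact ⟨p, fun h ↦ hv (by ext; simp [h]), rfl⟩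
  · rintro ⟨p, hp, rfl⟩
    exact ⟨_, _, rfl, fun i ↦ ⟨p i, rfl⟩⟩

variable (f : (Fin 3 → K) ≃ₗ[K] (Fin 3 → K))

lemma mem_hmap_image_basePlane_iff {P : PGPoint K} : P ∈ hmap f '' basePlane F K ↔
    ∃ (p : Fin 3 → F) (hp : p ≠ 0),
      P = mk K (f (algebraMap F K ∘ p)) (f.map_ne_zero_iff.mpr (algebraMap_comp_ne_zero hp)) := by
  constructor
  · rintro ⟨_, hQ, rfl⟩
    obtain ⟨p, hp, rfl⟩ := mem_basePlane_iff.mp hQ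
    exact ⟨p, hp, map_mk ..⟩
  · rintro ⟨p, hp, rfl⟩
    exact ⟨_, mem_basePlane_iff.mpr ⟨p, hp, rfl⟩, map_mk ..⟩

theorem mk_mem_splash_iff {x : Fin 3 → K} (hx : x ≠ 0) :
    mk K x hx ∈ splash (hmap f '' basePlane F K) ↔
      x 2 = 0 ∧ ¬ LinearIndependent F (f.symm x) := by
  rw [splash, Set.mem_ofPred_eq, mk_mem_linf_iff, not_linearIndependent_iff_exists_mem_span]
  refine and_congr_right fun _ ↦ ⟨?_, ?_⟩
  · rintro ⟨P, Q, hP, hQ, hPQ, hcol⟩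
    obtain ⟨p, hp, rfl⟩ := (mem_hmap_image_basePlane_iff f).mp hP
    obtain ⟨r, hr, rfl⟩ := (mem_hmap_image_basePlane_iff f).mp hQ
    have hind : LinearIndependent K (f ∘ fun i ↦ algebraMap F K ∘ ![p, r] i) :=
      (linearIndependent_fin_two_iff_mk_ne _ _).mpr hPQ
    exact ⟨![p, r], (linearIndependent_map_algebraMap_comp_iff f).mp hind,
      (mem_span_range_comp_iff f).mp ((exists_isLine_mem_iff hind hx).mp hcol)⟩
  · rintro ⟨v, hv, hxv⟩
    have hind := (linearIndependent_map_algebraMap_comp_iff f).mpr hv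
    exact ⟨_, _, (mem_hmap_image_basePlane_iff f).mpr ⟨v 0, hv.ne_zero 0, rfl⟩,
      (mem_hmap_image_basePlane_iff f).mpr ⟨v 1, hv.ne_zero 1, rfl⟩,
      (linearIndependent_fin_two_iff_mk_ne _ _).mp hind,
      (exists_isLine_mem_iff hind hx).mpr ((mem_span_range_comp_iff f).mpr hxv)⟩

end Splash

section NormalForm

variable {F K : Type*} [Field F] [Field K] [Algebra F K]

lemma toLin'_map_algebraMap_comp {ι : Type*} [Fintype ι] [DecidableEq ι]
    (g : Matrix.SpecialLinearGroup ι F) (p : ι → F) :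
    (g.map (algebraMap F K)).toLin' (algebraMap F K ∘ p) = algebraMap F K ∘ g.toLin' p :=
  (funext (RingHom.map_mulVec (algebraMap F K) g.1 p)).symm

lemma image_hmap_trans_toLin' (g : Matrix.SpecialLinearGroup (Fin 3) F)
    (f : (Fin 3 → K) ≃ₗ[K] (Fin 3 → K)) :
    hmap ((g.map (algebraMap F K)).toLin'.trans f) '' basePlane F K = hmap f '' basePlane F K := by
  ext P
  simp only [mem_hmap_image_basePlane_iff, LinearEquiv.trans_apply, toLin'_map_algebraMap_comp]
  constructor
  · rintro ⟨p, hp, rfl⟩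
    exact ⟨g.toLin' p, g.toLin'.map_ne_zero_iff.mpr hp, rfl⟩
  · rintro ⟨p, hp, rfl⟩
    refine ⟨g.toLin'.symm p, g.toLin'.symm.map_ne_zero_iff.mpr hp, ?_⟩
    simp only [LinearEquiv.apply_symm_apply]

lemma exists_specialLinearGroup_toLin'_eq_smul {ι : Type*} [Fintype ι] [DecidableEq ι]
    {p r : ι → F} (hp : p ≠ 0) (hr : r ≠ 0) :
    ∃ (g : Matrix.SpecialLinearGroup ι F) (a : F), g.toLin' p = a • r := by
  have : MulAction.IsPretransitive (Matrix.SpecialLinearGroup ι F) (Projectivization F (ι → F)) :=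
    MulAction.isPretransitive_of_is_two_pretransitive
  obtain ⟨g, hg⟩ := MulAction.exists_smul_eq (Matrix.SpecialLinearGroup ι F)
    (mk F p hp) (mk F r hr)
  obtain ⟨a, ha⟩ := (mk_eq_mk_iff' ..).mp hg
  exact ⟨g, a, ha.symm⟩

lemma IsSubplane.exists_eq_hmap_image_of_mem {π : Set (PGPoint K)} (hπ : IsSubplane F π)
    {T : PGPoint K} (hT : T ∈ π) :
    ∃ f : (Fin 3 → K) ≃ₗ[K] (Fin 3 → K),
      π = hmap f '' basePlane F K ∧ f (Pi.single 0 1) ∈ T.submodule := by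
  obtain ⟨f, rfl⟩ := hπ
  obtain ⟨p, hp, rfl⟩ := (mem_hmap_image_basePlane_iff f).mp hT
  obtain ⟨g, a, hg⟩ := exists_specialLinearGroup_toLin'_eq_smul
    (Pi.single_ne_zero_iff (i := 0).mpr one_ne_zero) hp
  refine ⟨(g.map (algebraMap F K)).toLin'.trans f, (image_hmap_trans_toLin' g f).symm, ?_⟩
  have hsingle : (Pi.single 0 1 : Fin 3 → K) = algebraMap F K ∘ Pi.single 0 1 := by
    ext i; simp [Pi.single_apply]
  have hsmul : algebraMap F K ∘ (a • p) = algebraMap F K a • (algebraMap F K ∘ p) := by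
    ext i; simp
  rw [LinearEquiv.trans_apply, hsingle, toLin'_map_algebraMap_comp, hg, hsmul, map_smul]
  exact Submodule.smul_mem _ _ ((mem_submodule_iff_eq_mk _).mpr rfl)

end NormalForm

section FieldDegree

open Polynomial

variable {F K : Type*} [Field F] [Field K] [Algebra F K]

lemma natDegree_minpoly_eq_two_of_aeval_eq_zero {t : K} (ht : t ∉ (algebraMap F K).range)
    {p : F[X]} (hp : p ≠ 0) (hdeg : p.natDegree ≤ 2) (hroot : aeval t p = 0) :
    (minpoly F t).natDegree = 2 := by
  have hint : IsIntegral F t := isAlgebraic_iff_isIntegral.mp ⟨p, hp, hroot⟩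
  exact le_antisymm ((natDegree_le_of_dvd (minpoly.dvd F t hroot) hp).trans hdeg)
    ((minpoly.two_le_natDegree_iff hint).mpr ht)

lemma natDegree_minpoly_div_eq_two {α β : K} (hαβ : LinearIndependent F ![α, β])
    (hinv : ¬ LinearIndependent F ![α⁻¹, β⁻¹, (α + β)⁻¹]) :
    (minpoly F (α / β)).natDegree = 2 := by
  have hα : α ≠ 0 := hαβ.ne_zero 0
  have hβ : β ≠ 0 := hαβ.ne_zero 1
  have hsum : α + β ≠ 0 := add_ne_zero_of_linearIndependent hαβ
  obtain ⟨c, hc, i, hi⟩ := Fintype.not_linearIndependent_iff.mp hinv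
  have hroot : algebraMap F K (c 1) * (α / β) ^ 2 +
      algebraMap F K (c 0 + c 1 + c 2) * (α / β) + algebraMap F K (c 0) = 0 := by
    simp only [Fin.sum_univ_three, Algebra.smul_def, Matrix.cons_val] at hc
    rw [map_add, map_add]
    field_simp at hc ⊢
    linear_combination hc
  refine natDegree_minpoly_eq_two_of_aeval_eq_zero
    (p := C (c 1) * X ^ 2 + C (c 0 + c 1 + c 2) * X + C (c 0)) ?_ ?_ natDegree_quadratic_le
    (by simpa using hroot)
  · rintro ⟨z, hz⟩
    have hdep : (1 : F) • α + (-z) • β = 0 := by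
      rw [one_smul, neg_smul, Algebra.smul_def, hz, div_mul_cancel₀ α hβ, add_neg_cancel]
    exact one_ne_zero (LinearIndependent.pair_iff.mp hαβ 1 (-z) hdep).1
  · intro h
    have h₁ : c 1 = 0 := by simpa using congrArg (coeff · 2) h
    have h₀ : c 0 = 0 := by simpa using congrArg (coeff · 0) h
    have h₂ : c 2 = 0 := by simpa [h₀, h₁, coeff_X_of_ne_one] using congrArg (coeff · 1) h
    exact hi (by fin_cases i <;> assumption)

theorem exists_natDegree_minpoly_eq_two_of_inv_mem {V W : Submodule F K}
    (hV : Module.finrank F V = 2) (hW : Module.finrank F W = 2)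
    (hinv : ∀ v ∈ V, v ≠ 0 → v⁻¹ ∈ W) : ∃ x : K, (minpoly F x).natDegree = 2 := by
  have : Module.Finite F V := Module.finite_of_finrank_eq_succ hV
  have : Module.Finite F W := Module.finite_of_finrank_eq_succ hW
  let b : Module.Basis (Fin 2) F V := Module.finBasisOfFinrankEq F V hV
  have hb : LinearIndependent F ![(b 0 : K), (b 1 : K)] := by
    have hcoe : V.subtype ∘ b = ![(b 0 : K), (b 1 : K)] := by ext i; fin_cases i <;> rfl
    exact hcoe ▸ b.linearIndependent.map' V.subtype V.ker_subtype
  have hrange : Set.range ![(b 0 : K)⁻¹, (b 1 : K)⁻¹, (b 0 + b 1 : K)⁻¹] ⊆ W := by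
    rw [Set.range_subset_iff, Fin.forall_fin_succ, Fin.forall_fin_two]
    exact ⟨hinv _ (b 0).2 (hb.ne_zero 0), hinv _ (b 1).2 (hb.ne_zero 1),
      hinv _ (V.add_mem (b 0).2 (b 1).2) (add_ne_zero_of_linearIndependent hb)⟩
  refine ⟨_, natDegree_minpoly_div_eq_two hb fun hind ↦ ?_⟩
  have hle := Submodule.finrank_mono (Submodule.span_le.mpr hrange)
  rw [finrank_span_eq_card hind, Fintype.card_fin, hW] at hle
  omega

lemma natDegree_minpoly_ne_two_of_odd_finrank (h : Odd (Module.finrank F K)) (x : K) :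
    (minpoly F x).natDegree ≠ 2 := by
  have := Module.finite_of_finrank_pos h.pos
  intro hx
  exact h.not_two_dvd_nat (hx ▸ minpoly.degree_dvd (Algebra.IsIntegral.isIntegral (R := F) x))

lemma finrank_eq_of_card_eq_pow [Fintype F] [Fintype K] {n : ℕ}
    (h : Fintype.card K = Fintype.card F ^ n) : Module.finrank F K = n := by
  rw [Module.card_eq_pow_finrank (K := F)] at h
  exact Nat.pow_right_injective Fintype.one_lt_card h

end FieldDegree

section Chart

variable {F K : Type*} [Field F] [Field K] [Algebra F K]

/-- The affine coordinates of the points of `S` on the line through `[t]` and `[u]`, in the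
coordinate `v ↦ [v • t + u]` which has `[u]` as origin and `[t]` as point at infinity. -/
def affineChart (S : Set (PGPoint K)) (t u : Fin 3 → K) : Set K :=
  {v | ∃ P ∈ S, v • t + u ∈ P.submodule}

lemma mem_affineChart_iff {S : Set (PGPoint K)} {t u : Fin 3 → K} {v : K} (h : v • t + u ≠ 0) :
    v ∈ affineChart S t u ↔ mk K (v • t + u) h ∈ S := by
  simp only [affineChart, Set.mem_ofPred_eq, mem_submodule_iff_eq_mk h, exists_eq_right]

lemma inv_mem_affineChart {S : Set (PGPoint K)} {t u : Fin 3 → K} {v : K} (hv : v ≠ 0)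
    (h : v ∈ affineChart S t u) : v⁻¹ ∈ affineChart S u t := by
  obtain ⟨P, hPS, hP⟩ := h
  refine ⟨P, hPS, ?_⟩
  simpa [smul_smul, hv, add_comm] using P.submodule.smul_mem v⁻¹ hP

lemma map_algebraMap_comp_mem_submodule {f : (Fin 3 → K) ≃ₗ[K] (Fin 3 → K)} {T : PGPoint K}
    (hT : hmap f '' basePlane F K ∩ linf K = {T}) {p : Fin 3 → F}
    (hp : f (algebraMap F K ∘ p) 2 = 0) : f (algebraMap F K ∘ p) ∈ T.submodule := by
  rcases eq_or_ne p 0 with rfl | hp₀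
  · simp
  · refine (mem_submodule_iff_eq_mk (f.map_ne_zero_iff.mpr (algebraMap_comp_ne_zero hp₀))).mpr ?_
    exact (hT.subset ⟨(mem_hmap_image_basePlane_iff f).mpr ⟨p, hp₀, rfl⟩,
      (mk_mem_linf_iff _).mpr hp⟩).symm

lemma linearIndependent_tail_symm {f : (Fin 3 → K) ≃ₗ[K] (Fin 3 → K)} {T : PGPoint K}
    (hT : hmap f '' basePlane F K ∩ linf K = {T}) (hf : f (Pi.single 0 1) ∈ T.submodule)
    {u : Fin 3 → K} (hu : u 2 = 0) (huT : u ∉ T.submodule) :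
    LinearIndependent F (Fin.tail (f.symm u)) := by
  by_contra hdep
  obtain ⟨s, -, hmem⟩ := not_linearIndependent_iff_exists_mem_span.mp hdep
  rw [Set.range_unique, Submodule.mem_span_singleton] at hmem
  obtain ⟨k, hk⟩ := hmem
  set p : Fin 3 → F := Fin.cons 0 (s default)
  have hdecomp : f.symm u 0 • f (Pi.single 0 1) + k • f (algebraMap F K ∘ p) = u := by
    rw [← map_smul, ← map_smul, ← map_add, ← f.eq_symm_apply]
    ext i
    refine Fin.cases ?_ (fun j ↦ ?_) i
    · simp [p]
    · simpa [p, Fin.tail] using congrFun hk j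
  have hT₂ := apply_two_eq_zero_of_mem_linf (hT.superset rfl).2 hf
  have hkp : k • f (algebraMap F K ∘ p) ∈ T.submodule := by
    rcases eq_or_ne k 0 with rfl | hk₀
    · simp
    · refine Submodule.smul_mem _ _ (map_algebraMap_comp_mem_submodule hT ?_)
      simpa [hT₂, hk₀, hu] using congrFun hdecomp 2
  exact huT (hdecomp ▸ add_mem (Submodule.smul_mem _ _ hf) hkp)

lemma mem_affineChart_splash_iff {f : (Fin 3 → K) ≃ₗ[K] (Fin 3 → K)} {u : Fin 3 → K}
    (ht : f (Pi.single 0 1) 2 = 0) (hu : u 2 = 0)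
    (hind : LinearIndependent F (Fin.tail (f.symm u))) {v : K} :
    v ∈ affineChart (splash (hmap f '' basePlane F K)) (f (Pi.single 0 1)) u ↔
      v + f.symm u 0 ∈ Submodule.span F (Set.range (Fin.tail (f.symm u))) := by
  have hcoord : f.symm (v • f (Pi.single 0 1) + u) =
      Fin.cons (v + f.symm u 0) (Fin.tail (f.symm u)) := by
    ext i
    refine Fin.cases ?_ (fun j ↦ ?_) i <;> simp [Fin.tail]
  have hne : v • f (Pi.single 0 1) + u ≠ 0 := by
    intro h
    refine hind.ne_zero 0 ?_
    simpa using congrFun (hcoord.symm.trans (congrArg f.symm h)) (Fin.succ 0)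
  rw [mem_affineChart_iff hne, mk_mem_splash_iff, hcoord]
  simp [ht, hu, linearIndependent_finSucc, hind]

lemma IsTangentSplash.centre_mem {S : Set (PGPoint K)} {T : PGPoint K}
    (h : IsTangentSplash F S T) : T ∈ S := by
  obtain ⟨π, hπ, hT, rfl⟩ := h
  obtain ⟨f, rfl, hf⟩ := hπ.exists_eq_hmap_image_of_mem (hT.superset rfl).1
  have ht : f (Pi.single 0 1) ≠ 0 := by simp
  rw [(mem_submodule_iff_eq_mk ht).mp hf, mk_mem_splash_iff, f.symm_apply_apply]
  exact ⟨apply_two_eq_zero_of_mem_linf (hT.superset rfl).2 hf, fun hind ↦ hind.ne_zero 1 (by simp)⟩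

theorem IsTangentSplash.exists_affineChart_eq_submodule {S : Set (PGPoint K)} {T : PGPoint K}
    (h : IsTangentSplash F S T) :
    ∃ t ∈ T.submodule, t ≠ 0 ∧ ∀ U ∈ S, U ≠ T → ∀ u ∈ U.submodule, u ≠ 0 →
      ∃ V : Submodule F K, Module.finrank F V = 2 ∧ V = affineChart S t u := by
  obtain ⟨π, hπ, hT, rfl⟩ := h
  obtain ⟨f, rfl, hf⟩ := hπ.exists_eq_hmap_image_of_mem (hT.superset rfl).1
  have ht := apply_two_eq_zero_of_mem_linf (hT.superset rfl).2 hf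
  refine ⟨f (Pi.single 0 1), hf, by simp, fun U hU hUT u hu hu₀ ↦ ?_⟩
  have hu₂ : u 2 = 0 := apply_two_eq_zero_of_mem_linf hU.1 hu
  obtain rfl := (mem_submodule_iff_eq_mk hu₀).mp hu
  have huT : u ∉ T.submodule := fun h ↦ hUT ((mem_submodule_iff_eq_mk hu₀).mp h).symm
  have hind := linearIndependent_tail_symm hT hf hu₂ huT
  refine ⟨.span F (Set.range (Fin.tail (f.symm u))), finrank_span_eq_card hind, ?_⟩
  have horigin : f.symm u 0 ∈ Submodule.span F (Set.range (Fin.tail (f.symm u))) := by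
    rw [← zero_add (f.symm u 0), ← mem_affineChart_splash_iff ht hu₂ hind]
    exact ⟨_, hU, by simp⟩
  ext v
  rw [SetLike.mem_coe, mem_affineChart_splash_iff ht hu₂ hind, Submodule.add_mem_iff_left _ horigin]

theorem statement17_general {S : Set (PGPoint K)} {T U : PGPoint K}
    (hdeg : ∀ x : K, (minpoly F x).natDegree ≠ 2)
    (hT : IsTangentSplash F S T) (hU : IsTangentSplash F S U) : T = U := by
  by_contra hne
  obtain ⟨t, htT, ht, hchartT⟩ := hT.exists_affineChart_eq_submodule
  obtain ⟨u, huU, hu, hchartU⟩ := hU.exists_affineChart_eq_submodule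
  obtain ⟨V, hVrank, hV⟩ := hchartT U hU.centre_mem (Ne.symm hne) u huU hu
  obtain ⟨W, hWrank, hW⟩ := hchartU T hT.centre_mem hne t htT ht
  have hinv : ∀ v ∈ V, v ≠ 0 → v⁻¹ ∈ W := fun v hv hv₀ ↦
    hW.superset (inv_mem_affineChart hv₀ (hV.subset hv))
  obtain ⟨x, hx⟩ := exists_natDegree_minpoly_eq_two_of_inv_mem hVrank hWrank hinv
  exact hdeg x hx

end Chart

/-- a tangent splash has a unique centre: if a set `S` of `q²+1`
points of `ℓ∞` is a tangent splash with centre `T` and also with centre `U`,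
then `T = U`. -/
theorem statement17 (q : ℕ) (F K : Type) [Field F] [Field K] [Fintype F] [Fintype K]
    [Algebra F K] (hF : Fintype.card F = q) (hK : Fintype.card K = q ^ 3)
    (S : Set (PGPoint K)) (hcard : S.ncard = q ^ 2 + 1) (T U : PGPoint K)
    (hT : IsTangentSplash F S T) (hU : IsTangentSplash F S U) :
    T = U := by
  have hfinrank : Module.finrank F K = 3 := finrank_eq_of_card_eq_pow (hF ▸ hK)
  exact statement17_general (natDegree_minpoly_ne_two_of_odd_finrank (hfinrank ▸ by decide)) hT hU

end TangentSplashPaper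
end
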